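/- arXiv:1705.09615 — 2 statements merged into one kernel-verified Lean document; each statement's English description precedes it below -/
import Mathlib

section
/- There exists a special schema S with a predicate symbol p having a labelled occurrence in Need_S(ω) such that there is no pω-couple for S. (An explicit witness is the schema: x := c(); if p(x) then { u := g₁(); v := g₂(); } else { v := g₁(); u := g₂(); }; w := f(u); while q(w) do { w := f(v); a := h(a); v := k(a); }.) -/
/-!
The witness is the schema

`x := c(); if p(x) then {u := g₁(); v := g₂()} else {v := g₁(); u := g₂()};`
`w := f(u); while q(w) do {w := f(v); a := h(a); v := k(a)}`.

Its complete paths are indexed by the value `b` of `p` and the number `n` of loop iterations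
(`mem_paths_witness`). The loop tests `q` on `f(g₁), f(g₂), f(k(h(a))), f(k(h(h(a)))), …` when `p` is
true, and on the same terms with the first two exchanged when `p` is false. A run terminates exactly
when `q` is false on some term of its sequence (`terminates_witness_iff`), so termination does not
depend on the value of `p` and there is no `pω`-couple.

Freeness and liberality both follow from a rank on terms (`rk b`) on the path where `p` has
value `b`: it strictly increases along the assignments from `w := f(u)` on (`isChain_vals_loop`), the
three constants assigned before having smaller distinct ranks, and it strictly increases along the
successive tests of `q` (`rk_iter_lt`). So the assigned terms are pairwise distinct, and so are the
tested ones.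

Finally `p` lies in `Need(ω)` because it controls `u := g₁()`, whose value flows through `w := f(u)`
into the while predicate `q`.
-/

/-!
Common formalization of program schemas (Danicic–Hierons–Laurence):
letters/paths, Herbrand semantics, freeness, liberality, subschemas,
data/control dependence, Weiser's set `Need`, slices and couples.
Function symbols, predicate symbols, variables and labels are all
modelled by `ℕ` (function and predicate symbols kept disjoint by
construction of the syntax).
-/

namespace SchemaSlicing

/-- Letters of the alphabet Λ(S): assignment letters `y := f^(l)(args)` and
predicate letters `⟨p^(l)(args), b⟩`. -/
inductive Letter : Type
  | asn (y : ℕ) (f : ℕ) (l : ℕ) (args : List ℕ)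
  | prd (p : ℕ) (l : ℕ) (args : List ℕ) (b : Bool)
  deriving DecidableEq

/-- Program schemas. -/
inductive Schema : Type
  | skip
  | assign (y : ℕ) (f : ℕ) (l : ℕ) (args : List ℕ)
  | seq (S₁ S₂ : Schema)
  | ite (p : ℕ) (l : ℕ) (args : List ℕ) (Tt Tf : Schema)
  | whil (p : ℕ) (l : ℕ) (args : List ℕ) (body : Schema)

/-- Complete paths of a while loop iterated `n` times. -/
def whileIter (p l : ℕ) (args : List ℕ) (B : Set (List Letter)) : ℕ → Set (List Letter)
  | 0 => {[Letter.prd p l args false]}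
  | n + 1 => {σ | ∃ x ∈ B, ∃ y ∈ whileIter p l args B n, σ = Letter.prd p l args true :: (x ++ y)}

/-- The set Π(S) of complete paths through a schema. -/
def Paths : Schema → Set (List Letter)
  | .skip => {[]}
  | .assign y f l args => {[Letter.asn y f l args]}
  | .seq S₁ S₂ => {σ | ∃ x ∈ Paths S₁, ∃ y ∈ Paths S₂, σ = x ++ y}
  | .ite p l args Tt Tf =>
      {σ | (∃ x ∈ Paths Tt, σ = Letter.prd p l args true :: x) ∨
           (∃ x ∈ Paths Tf, σ = Letter.prd p l args false :: x)}
  | .whil p l args body => {σ | ∃ n, σ ∈ whileIter p l args (Paths body) n}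

/-- pre(Π(S)): finite prefixes of complete paths. -/
def PrePaths (S : Schema) : Set (List Letter) := {σ | ∃ τ, σ <+: τ ∧ τ ∈ Paths S}

/-- μ is a path-segment of S. -/
def PathSegment (S : Schema) (μ : List Letter) : Prop := ∃ a b, a ++ μ ++ b ∈ Paths S

/-- μ is a terminal path-segment of S. -/
def TerminalSegment (S : Schema) (μ : List Letter) : Prop := ∃ a, a ++ μ ∈ Paths S

/-- An interpretation over a domain `D`. -/
structure Interp (D : Type) where
  fn : ℕ → List D → D
  pr : ℕ → List D → Bool

/-- One execution step on states. -/
def stepL {D : Type} (I : Interp D) (d : ℕ → D) : Letter → (ℕ → D)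
  | .asn y f _ args => Function.update d y (I.fn f (args.map d))
  | .prd _ _ _ _ => d

/-- `M[σ]^I_d`: the state after executing the assignment letters of σ from d. -/
def execP {D : Type} (I : Interp D) (d : ℕ → D) (σ : List Letter) : ℕ → D :=
  σ.foldl (stepL I) d

/-- σ is consistent with the interpretation `I` from initial state `d`:
every predicate letter along σ is evaluated according to `I`. -/
def Agrees {D : Type} (I : Interp D) (d : ℕ → D) (σ : List Letter) : Prop :=
  ∀ τ p l args b, τ ++ [Letter.prd p l args b] <+: σ →
    I.pr p (args.map (execP I d τ)) = b

/-- σ is the (terminating) path `π_S(I,d)`. -/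
def TermRun {D : Type} (S : Schema) (I : Interp D) (d : ℕ → D) (σ : List Letter) : Prop :=
  σ ∈ Paths S ∧ Agrees I d σ

/-- `M[S]^I_d ≠ ⊥`. -/
def Terminates {D : Type} (S : Schema) (I : Interp D) (d : ℕ → D) : Prop :=
  ∃ σ, TermRun S I d σ

/-- Terms over function symbols and variables (the Herbrand domain). -/
inductive Trm : Type
  | var : ℕ → Trm
  | app : ℕ → List Trm → Trm

/-- A Herbrand interpretation is determined by its predicate part. -/
abbrev HInterp := ℕ → List Trm → Bool

/-- The Herbrand interpretation with predicate part `h`. -/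
def herb (h : HInterp) : Interp Trm := ⟨Trm.app, h⟩

/-- The natural state `e`. -/
def eSt : ℕ → Trm := Trm.var

/-- `M[σ]_e`: Herbrand execution of the assignment letters of σ from e. -/
def hexec (σ : List Letter) : ℕ → Trm := execP (herb fun _ _ => false) eSt σ

/-- σ is consistent with the Herbrand interpretation `i` from `e`. -/
def hAgrees (i : HInterp) (σ : List Letter) : Prop := Agrees (herb i) eSt σ

/-- A schema is free if every prefix of a complete path is a prefix of
`π_S(i,e)` for some Herbrand interpretation i. -/
def Free (S : Schema) : Prop := ∀ σ ∈ PrePaths S, ∃ i : HInterp, hAgrees i σ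

/-- A schema is liberal if along any executable path (from `e`, under a
Herbrand interpretation) no two assignments produce the same term. -/
def Liberal (S : Schema) : Prop :=
  ∀ (i : HInterp) (μ ν : List Letter) (y f l args w g m brgs),
    (μ ++ Letter.asn y f l args :: (ν ++ [Letter.asn w g m brgs])) ∈ PrePaths S →
    hAgrees i (μ ++ Letter.asn y f l args :: (ν ++ [Letter.asn w g m brgs])) →
    hexec (μ ++ [Letter.asn y f l args]) y ≠
      hexec (μ ++ Letter.asn y f l args :: (ν ++ [Letter.asn w g m brgs])) w

/-- Labelled symbols: labelled function symbols and labelled predicate symbols. -/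
inductive LSym : Type
  | fn (f l : ℕ)
  | pr (p l : ℕ)
  deriving DecidableEq

/-- The set of labelled symbols occurring in a schema. -/
def lsymSet : Schema → Set LSym
  | .skip => ∅
  | .assign _ f l _ => {LSym.fn f l}
  | .seq a b => lsymSet a ∪ lsymSet b
  | .ite p l _ t e => insert (LSym.pr p l) (lsymSet t ∪ lsymSet e)
  | .whil p l _ b => insert (LSym.pr p l) (lsymSet b)

/-- Number of occurrences of a labelled symbol in a schema. -/
def lsymCount : Schema → LSym → ℕ
  | .skip, _ => 0
  | .assign _ f l _, x => if x = LSym.fn f l then 1 else 0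
  | .seq a b, x => lsymCount a x + lsymCount b x
  | .ite p l _ t e, x => (if x = LSym.pr p l then 1 else 0) + lsymCount t x + lsymCount e x
  | .whil p l _ b, x => (if x = LSym.pr p l then 1 else 0) + lsymCount b x

/-- Standing convention: distinct occurrences of the same symbol carry distinct labels. -/
def WellLabelled (S : Schema) : Prop := ∀ x, lsymCount S x ≤ 1

/-- Number of occurrences of a predicate symbol in a schema. -/
def predCount : Schema → ℕ → ℕ
  | .skip, _ => 0
  | .assign _ _ _ _, _ => 0
  | .seq a b, p => predCount a p + predCount b p
  | .ite q _ _ t e, p => (if q = p then 1 else 0) + predCount t p + predCount e p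
  | .whil q _ _ b, p => (if q = p then 1 else 0) + predCount b p

/-- No predicate symbol occurs more than once. -/
def PredLinear (S : Schema) : Prop := ∀ p, predCount S p ≤ 1

/-- `Occurs T S`: T occurs as a subtree (statement) of S. -/
inductive Occurs : Schema → Schema → Prop
  | refl (S : Schema) : Occurs S S
  | seqL {S T U : Schema} : Occurs S T → Occurs S (.seq T U)
  | seqR {S T U : Schema} : Occurs S U → Occurs S (.seq T U)
  | iteT {S t e : Schema} {p l args} : Occurs S t → Occurs S (.ite p l args t e)
  | iteF {S t e : Schema} {p l args} : Occurs S e → Occurs S (.ite p l args t e)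
  | whilB {S b : Schema} {p l args} : Occurs S b → Occurs S (.whil p l args b)

/-- The schema contains an assignment to the variable v. -/
def AssignsTo : Schema → ℕ → Prop
  | .skip, _ => False
  | .assign y _ _ _, v => y = v
  | .seq a b, v => AssignsTo a v ∨ AssignsTo b v
  | .ite _ _ _ t e, v => AssignsTo t v ∨ AssignsTo e v
  | .whil _ _ _ b, v => AssignsTo b v

/-- The schema contains an assignment `v := f(...)`. -/
def AssignsWith : Schema → ℕ → ℕ → Prop
  | .skip, _, _ => False
  | .assign y g _ _, f, v => g = f ∧ y = v
  | .seq a b, f, v => AssignsWith a f v ∨ AssignsWith b f v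
  | .ite _ _ _ t e, f, v => AssignsWith t f v ∨ AssignsWith e f v
  | .whil _ _ _ b, f, v => AssignsWith b f v

/-- If a function symbol occurs in assignments in both parts of an if
predicate, then those assignments assign to distinct variables. -/
def IfPartsCondition (S : Schema) : Prop :=
  ∀ p l args t e, Occurs (Schema.ite p l args t e) S →
    ∀ f v, AssignsWith t f v → AssignsWith e f v → False

/-- Special schemas: (well-labelled,) predicate-linear, free, liberal,
satisfying the condition on the two parts of each if predicate. -/
def Special (S : Schema) : Prop :=
  WellLabelled S ∧ PredLinear S ∧ Free S ∧ Liberal S ∧ IfPartsCondition S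

/-- `Subschema T S`: T is obtained from S by deleting statements. -/
inductive Subschema : Schema → Schema → Prop
  | skip (S : Schema) : Subschema .skip S
  | refl (S : Schema) : Subschema S S
  | seqL (S₁ S₂ : Schema) : Subschema S₁ (.seq S₁ S₂)
  | seqR (S₁ S₂ : Schema) : Subschema S₂ (.seq S₁ S₂)
  | seqCongrL {S' S : Schema} (T : Schema) :
      Subschema S' S → Subschema (.seq S' T) (.seq S T)
  | seqCongrR {T' T : Schema} (S : Schema) :
      Subschema T' T → Subschema (.seq S T') (.seq S T)
  | whilCongr {T' T : Schema} (p l : ℕ) (args : List ℕ) :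
      Subschema T' T → Subschema (.whil p l args T') (.whil p l args T)
  | iteCongrT {T' T : Schema} (p l : ℕ) (args : List ℕ) (E : Schema) :
      Subschema T' T → Subschema (.ite p l args T' E) (.ite p l args T E)
  | iteCongrF {E' E : Schema} (p l : ℕ) (args : List ℕ) (T : Schema) :
      Subschema E' E → Subschema (.ite p l args T E') (.ite p l args T E)
  | trans {A B C : Schema} : Subschema A B → Subschema B C → Subschema A C

/-- T is a u-slice of S (u a variable): over every domain, state and
interpretation, if S terminates then T terminates with the same final value of u. -/
def IsUSlice (S T : Schema) (u : ℕ) : Prop :=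
  ∀ (D : Type) (I : Interp D) (d : ℕ → D),
    Terminates S I d →
      Terminates T I d ∧
      ∀ σ τ, TermRun S I d σ → TermRun T I d τ → execP I d σ u = execP I d τ u

/-- T is an ω-slice of S: S and T have the same termination behaviour. -/
def IsOmegaSlice (S T : Schema) : Prop :=
  ∀ (D : Type) (I : Interp D) (d : ℕ → D), Terminates S I d ↔ Terminates T I d

/-- `IsFTrm F t`: t is an F-term, for a (nonempty) word F of function symbols. -/
inductive IsFTrm : List ℕ → Trm → Prop
  | base (f : ℕ) (ts : List Trm) : IsFTrm [f] (.app f ts)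
  | step {F : List ℕ} {t : Trm} (g : ℕ) {ts : List Trm} :
      t ∈ ts → IsFTrm F t → IsFTrm (F ++ [g]) (.app g ts)

/-- `IsVFTrm v F t`: t is a vF-term. -/
inductive IsVFTrm (v : ℕ) : List ℕ → Trm → Prop
  | base : IsVFTrm v [] (.var v)
  | step {F : List ℕ} {t : Trm} (g : ℕ) {ts : List Trm} :
      t ∈ ts → IsVFTrm v F t → IsVFTrm v (F ++ [g]) (.app g ts)

/-- The function symbol f occurs in the term t. -/
inductive OccIn (f : ℕ) : Trm → Prop
  | here (ts : List Trm) : OccIn f (.app f ts)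
  | there {g : ℕ} {ts : List Trm} {t : Trm} : t ∈ ts → OccIn f t → OccIn f (.app g ts)

/-- Labelled terms: applications additionally record the label of the
assignment that created them. -/
inductive LTrm : Type
  | var : ℕ → LTrm
  | app : ℕ → ℕ → List LTrm → LTrm

def lStep (d : ℕ → LTrm) : Letter → (ℕ → LTrm)
  | .asn y f l args => Function.update d y (LTrm.app f l (args.map d))
  | .prd _ _ _ _ => d

/-- Labelled Herbrand execution from e. -/
def lexec (σ : List Letter) : ℕ → LTrm := σ.foldl lStep LTrm.var

/-- F-terms for words F of labelled function symbols. -/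
inductive IsFLTrm : List (ℕ × ℕ) → LTrm → Prop
  | base (f l : ℕ) (ts : List LTrm) : IsFLTrm [(f, l)] (.app f l ts)
  | step {F : List (ℕ × ℕ)} {t : LTrm} (g m : ℕ) {ts : List LTrm} :
      t ∈ ts → IsFLTrm F t → IsFLTrm (F ++ [(g, m)]) (.app g m ts)

/-- `f^(l) ⤳ u` for a variable u. -/
def DepFV (S : Schema) (fl : ℕ × ℕ) (u : ℕ) : Prop :=
  ∃ σ, TerminalSegment S σ ∧ IsFLTrm [fl] (lexec σ u)

/-- `f^(l) ⤳ g^(m)` for labelled function symbols. -/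
def DepFF (S : Schema) (fl gm : ℕ × ℕ) : Prop :=
  ∃ σ, PathSegment S σ ∧ ∃ w, IsFLTrm [fl, gm] (lexec σ w)

/-- `f^(l) ⤳ q^(m)` for a labelled predicate. -/
def DepFP (S : Schema) (fl : ℕ × ℕ) (q m : ℕ) : Prop :=
  ∃ σ args Z, PathSegment S (σ ++ [Letter.prd q m args Z]) ∧
    ∃ w ∈ args, IsFLTrm [fl] (lexec σ w)

/-- `f^(l) ⤳ x` for a labelled symbol x. -/
def DepFX (S : Schema) (fl : ℕ × ℕ) : LSym → Prop
  | .fn g m => DepFF S fl (g, m)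
  | .pr q m => DepFP S fl q m

/-- The labelled predicate `p^(l)` controls the labelled symbol x in S. -/
def ControlsL (S : Schema) (p l : ℕ) (x : LSym) : Prop :=
  (∃ args t e, Occurs (Schema.ite p l args t e) S ∧ (x ∈ lsymSet t ∨ x ∈ lsymSet e)) ∨
  (∃ args b, Occurs (Schema.whil p l args b) S ∧ x ∈ lsymSet b)

/-- `p^(l)` is a while predicate of S. -/
def IsWhilePred (S : Schema) (p l : ℕ) : Prop :=
  ∃ args b, Occurs (Schema.whil p l args b) S

/-- Slicing criteria: a variable, or termination (ω). -/
inductive Crit : Type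
  | var : ℕ → Crit
  | omega

/-- Weiser's labelled symbol set `Need_S(u)`. -/
inductive Need (S : Schema) : Crit → LSym → Prop
  | ofVar {v f l : ℕ} : DepFV S (f, l) v → Need S (.var v) (.fn f l)
  | ofOmega {p l : ℕ} : IsWhilePred S p l → Need S .omega (.pr p l)
  | ofDep {u : Crit} {f l : ℕ} {x : LSym} :
      Need S u x → DepFX S (f, l) x → Need S u (.fn f l)
  | ofControl {u : Crit} {p l : ℕ} {x : LSym} :
      Need S u x → ControlsL S p l x → Need S u (.pr p l)

/-- `{i,j}` is a p(ts)-couple: i and j differ at the predicate term p(ts)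
and agree on every other predicate term. -/
def PTCouple (p : ℕ) (ts : List Trm) (i j : HInterp) : Prop :=
  i p ts ≠ j p ts ∧ ∀ q ss, (q, ss) ≠ (p, ts) → i q ss = j q ss

/-- `{i,j}` is a p(ts)u-couple for S. -/
def PTUCouple (S : Schema) (p : ℕ) (ts : List Trm) (u : ℕ) (i j : HInterp) : Prop :=
  PTCouple p ts i j ∧
  ∃ σ τ, TermRun S (herb i) eSt σ ∧ TermRun S (herb j) eSt τ ∧ hexec σ u ≠ hexec τ u

/-- `{i,j}` is a pu-couple for S. -/
def PUCouple (S : Schema) (p u : ℕ) (i j : HInterp) : Prop :=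
  ∃ ts, PTUCouple S p ts u i j

/-- `{i,j}` is a pω-couple for S: a p-couple such that exactly one of the
two runs terminates. -/
def POmegaCouple (S : Schema) (p : ℕ) (i j : HInterp) : Prop :=
  ∃ ts, PTCouple p ts i j ∧
    Xor' (Terminates S (herb i) eSt) (Terminates S (herb j) eSt)

/-- A `p^(l)u`-couple for S presented with its divergence data: the common
prefix `head` (the head of the couple), the argument vector of `p^(l)` at the
divergence point, and the two tails. -/
def LPUCoupleData (S : Schema) (p l u : ℕ) (i j : HInterp)
    (head : List Letter) (args : List ℕ) (ρt ρf : List Letter) : Prop :=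
  PTCouple p (args.map (hexec head)) i j ∧
  TermRun S (herb i) eSt (head ++ Letter.prd p l args true :: ρt) ∧
  TermRun S (herb j) eSt (head ++ Letter.prd p l args false :: ρf) ∧
  hexec (head ++ Letter.prd p l args true :: ρt) u ≠
    hexec (head ++ Letter.prd p l args false :: ρf) u

/-- A (p,X)-link in S. -/
def PLink (S : Schema) (p : ℕ) (X : Bool) (ν : List Letter) : Prop :=
  (∃ l args t e, Occurs (Schema.ite p l args t e) S ∧
     ∃ π ∈ Paths (if X then t else e), ν = Letter.prd p l args X :: π) ∨
  (∃ l args b, Occurs (Schema.whil p l args b) S ∧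
     ((X = false ∧ ν = [Letter.prd p l args false]) ∨
      (X = true ∧ ∃ π ∈ Paths b, ∃ ρ ∈ Paths (Schema.whil p l args b),
        ν = Letter.prd p l args true :: (π ++ ρ))))

/-- The path-segment μ v-feeds p to q in S. -/
def VFeeds (S : Schema) (v p q : ℕ) (μ : List Letter) : Prop :=
  ∃ X ν, PLink S p X ν ∧ ∃ m args, PathSegment S (ν ++ μ ++ [Letter.prd q m args true]) ∧
    ∃ w ∈ args, ∃ F, IsVFTrm v F (hexec μ w)

/-- There is an assignment to v in the body (while) or in the true or
false part (if) of the predicate p in S. -/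
def AssignInPart (S : Schema) (p v : ℕ) : Prop :=
  (∃ l args t e, Occurs (Schema.ite p l args t e) S ∧ (AssignsTo t v ∨ AssignsTo e v)) ∨
  (∃ l args b, Occurs (Schema.whil p l args b) S ∧ AssignsTo b v)

/-- The (unlabelled) symbol of a letter (function symbols and predicate
symbols kept disjoint via a sum). -/
def symOf : Letter → Sum ℕ ℕ
  | .asn _ f _ _ => .inl f
  | .prd p _ _ _ => .inr p

/-- The labelled symbol of a letter. -/
def lsymOf : Letter → LSym
  | .asn _ f l _ => .fn f l
  | .prd p l _ _ => .pr p l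

/-- The vector of variables referenced by a letter. -/
def refsOf : Letter → List ℕ
  | .asn _ _ _ args => args
  | .prd _ _ args _ => args

/-- Statements of predicate-free schemas. -/
inductive PFStmt : Type
  | skip
  | asn (y : ℕ) (f : ℕ) (args : List ℕ)
  deriving DecidableEq

/-- A predicate-free schema is a finite sequence of skips and assignments. -/
abbrev PFS := List PFStmt

def pfStep (d : ℕ → Trm) : PFStmt → (ℕ → Trm)
  | .skip => d
  | .asn y f args => Function.update d y (Trm.app f (args.map d))

/-- Execution of a predicate-free schema from a state d. -/
def pfExecFrom (d : ℕ → Trm) (U : PFS) : ℕ → Trm := U.foldl pfStep d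

/-- `M[U]_e` for a predicate-free schema. -/
def pfExec (U : PFS) : ℕ → Trm := pfExecFrom eSt U

/-- A predicate-free schema is liberal: executed from e, no two of its
assignments produce equal term values. -/
def PFLiberal (U : PFS) : Prop :=
  ∀ A y f args B w g brgs C,
    U = A ++ PFStmt.asn y f args :: (B ++ PFStmt.asn w g brgs :: C) →
    pfExec (A ++ [PFStmt.asn y f args]) y ≠
      pfExec (A ++ PFStmt.asn y f args :: (B ++ [PFStmt.asn w g brgs])) w

end SchemaSlicing

namespace SchemaSlicing

/-! ### The witness and its paths

Variables: `x = 0`, `u = 1`, `v = 2`, `w = 3`, `a = 4`. Function symbols: `c = 0`, `g₁ = 1`, `g₂ = 2`,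
`f = 3`, `h = 4`, `k = 5`. Predicate symbols: `p = 0`, `q = 1`. -/

/-- The body of the loop: `w := f(v); a := h(a); v := k(a)`. -/
def loopBody : Schema :=
  .seq (.assign 3 3 1 [2]) (.seq (.assign 4 4 0 [4]) (.assign 2 5 0 [4]))

/-- The part of the witness after `x := c()` and before `w := f(u)`. -/
def branch : Schema :=
  .ite 0 0 [0] (.seq (.assign 1 1 0 []) (.assign 2 2 0 []))
    (.seq (.assign 2 1 1 []) (.assign 1 2 1 []))

/-- The schema witnessing the theorem. -/
def witness : Schema :=
  .seq (.assign 0 0 0 []) (.seq branch (.seq (.assign 3 3 0 [1]) (.whil 1 0 [3] loopBody)))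

/-- The path through the while loop that performs exactly `n` iterations. -/
def loopPath : ℕ → List Letter
  | 0 => [.prd 1 0 [3] false]
  | n + 1 => .prd 1 0 [3] true :: .asn 3 3 1 [2] :: .asn 4 4 0 [4] :: .asn 2 5 0 [4] :: loopPath n

/-- The path of the witness up to the loop, `b` being the value of `p`. -/
def headPath : Bool → List Letter
  | true => [.asn 0 0 0 [], .prd 0 0 [0] true, .asn 1 1 0 [], .asn 2 2 0 [], .asn 3 3 0 [1]]
  | false => [.asn 0 0 0 [], .prd 0 0 [0] false, .asn 2 1 1 [], .asn 1 2 1 [], .asn 3 3 0 [1]]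

lemma mem_whileIter_iff (n : ℕ) (σ : List Letter) :
    σ ∈ whileIter 1 0 [3] (Paths loopBody) n ↔ σ = loopPath n := by
  induction n generalizing σ with
  | zero => simp [whileIter, loopPath]
  | succ n ih => simp [whileIter, loopPath, loopBody, Paths] at ih ⊢; simp [ih]

lemma mem_paths_witness (σ : List Letter) :
    σ ∈ Paths witness ↔ ∃ b n, σ = headPath b ++ loopPath n := by
  have h : ∀ τ, τ ∈ Paths (.whil 1 0 [3] loopBody) ↔ ∃ n, τ = loopPath n := by
    intro τ; simp [Paths, ← mem_whileIter_iff]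
  simp only [witness, Paths, branch, Set.mem_ofPred_eq, Set.mem_singleton_iff] at h ⊢
  constructor
  · rintro ⟨_, rfl, _, ⟨_, hx, _, ⟨_, rfl, _, hy, rfl⟩, rfl⟩, rfl⟩
    obtain ⟨n, rfl⟩ := (h _).1 hy
    rcases hx with ⟨_, ⟨_, rfl, _, rfl, rfl⟩, rfl⟩ | ⟨_, ⟨_, rfl, _, rfl, rfl⟩, rfl⟩
    · exact ⟨true, n, rfl⟩
    · exact ⟨false, n, rfl⟩
  · rintro ⟨b, n, rfl⟩
    refine ⟨_, rfl, _, ⟨(headPath b).tail.dropLast, ?_, _, ⟨_, rfl, _, (h _).2 ⟨n, rfl⟩, rfl⟩, rfl⟩,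
      ?_⟩
    · cases b
      · exact Or.inr ⟨_, ⟨_, rfl, _, rfl, rfl⟩, rfl⟩
      · exact Or.inl ⟨_, ⟨_, rfl, _, rfl, rfl⟩, rfl⟩
    · cases b <;> rfl

/-! ### Execution along paths -/

/-- The condition that a single letter imposes on an interpretation in state `d`. -/
def LetterOK {D : Type} (I : Interp D) (d : ℕ → D) : Letter → Prop
  | .asn _ _ _ _ => True
  | .prd p _ args b => I.pr p (args.map d) = b

lemma agrees_nil {D : Type} (I : Interp D) (d : ℕ → D) : Agrees I d [] := by
  intro τ p l args b h
  simp at h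

lemma agrees_cons {D : Type} (I : Interp D) (d : ℕ → D) (c : Letter) (σ : List Letter) :
    Agrees I d (c :: σ) ↔ LetterOK I d c ∧ Agrees I (stepL I d c) σ := by
  constructor
  · intro h
    refine ⟨?_, fun τ p l args b hτ => ?_⟩
    · cases c with
      | asn => trivial
      | prd p l args b => exact h [] p l args b (by simp)
    · exact h (c :: τ) p l args b (by simpa using hτ)
  · rintro ⟨h₁, h₂⟩ τ p l args b hτ
    cases τ with
    | nil =>
      obtain rfl : Letter.prd p l args b = c := by simpa using hτ
      exact h₁
    | cons c' τ =>
      obtain ⟨rfl, hτ'⟩ : c' = c ∧ τ ++ [Letter.prd p l args b] <+: σ := by simpa using hτ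
      exact h₂ τ p l args b hτ'

lemma Agrees.of_prefix {D : Type} {I : Interp D} {d : ℕ → D} {σ τ : List Letter}
    (h : Agrees I d τ) (hσ : σ <+: τ) : Agrees I d σ :=
  fun _ _ _ _ _ hρ => h _ _ _ _ _ (hρ.trans hσ)

/-- The effect of one loop iteration on a Herbrand state. -/
def iter (d : ℕ → Trm) : ℕ → Trm :=
  Function.update (Function.update (Function.update d 3 (.app 3 [d 2])) 4 (.app 4 [d 4])) 2
    (.app 5 [.app 4 [d 4]])

/-- The state on entry to the loop, `b` being the value of `p`. -/
def entry (b : Bool) : ℕ → Trm := execP (herb fun _ _ => false) eSt (headPath b)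

lemma agrees_loopPath (i : HInterp) (n : ℕ) (d : ℕ → Trm) :
    Agrees (herb i) d (loopPath n) ↔
      (∀ m < n, i 1 [iter^[m] d 3] = true) ∧ i 1 [iter^[n] d 3] = false := by
  induction n generalizing d with
  | zero => simp [loopPath, agrees_cons, agrees_nil, LetterOK, herb]
  | succ n ih =>
    have hstep : Agrees (herb i) d (loopPath (n + 1)) ↔
        i 1 [d 3] = true ∧ Agrees (herb i) (iter d) (loopPath n) := by
      have : iter d = stepL (herb i) (stepL (herb i) (stepL (herb i) d (.asn 3 3 1 [2]))
          (.asn 4 4 0 [4])) (.asn 2 5 0 [4]) := by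
        simp [iter, stepL, herb]
      rw [this]
      simp [loopPath, agrees_cons, LetterOK, stepL, herb]
    rw [hstep, ih, Nat.forall_lt_succ_left']
    simp [Function.iterate_succ_apply, and_assoc]

lemma agrees_witness_path (i : HInterp) (b : Bool) (n : ℕ) :
    Agrees (herb i) eSt (headPath b ++ loopPath n) ↔ i 0 [.app 0 []] = b ∧
      (∀ m < n, i 1 [iter^[m] (entry b) 3] = true) ∧ i 1 [iter^[n] (entry b) 3] = false := by
  rw [← agrees_loopPath]
  cases b <;>
    simp [headPath, entry, execP, agrees_cons, LetterOK, stepL, herb]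

/-! ### Termination does not depend on the value of `p` -/

/-- Least-number principle: a run terminates iff some term of its sequence of tests falsifies `q`. -/
lemma terminates_witness_iff (i : HInterp) :
    Terminates witness (herb i) eSt ↔
      ∃ n, i 1 [iter^[n] (entry (i 0 [.app 0 []])) 3] = false := by
  simp only [Terminates, TermRun, mem_paths_witness]
  constructor
  · rintro ⟨_, ⟨b, n, rfl⟩, h⟩
    obtain ⟨rfl, -, h⟩ := (agrees_witness_path i b n).1 h
    exact ⟨n, h⟩
  · intro h
    classical
    exact ⟨_, ⟨_, Nat.find h, rfl⟩, (agrees_witness_path i _ _).2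
      ⟨rfl, fun m hm => by simpa using Nat.find_min h hm, Nat.find_spec h⟩⟩

/-- The tested terms depend only on the initial values of `w`, `v` and `a`. -/
lemma iter_congr (n : ℕ) (d d' : ℕ → Trm) (hw : d 3 = d' 3) (hv : d 2 = d' 2) (ha : d 4 = d' 4) :
    iter^[n] d 3 = iter^[n] d' 3 := by
  induction n generalizing d d' with
  | zero => exact hw
  | succ n ih =>
    exact ih _ _ (by simp [iter, hv]) (by simp [iter, ha]) (by simp [iter, ha])

/-- The two branches of `p` exchange the first two tested terms and leave the others alone. -/
lemma exists_test_symm (P : Trm → Prop) (b : Bool) (h : ∃ n, P (iter^[n] (entry b) 3)) :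
    ∃ n, P (iter^[n] (entry !b) 3) := by
  obtain ⟨n, hn⟩ := h
  match n, hn with
  | 0, hn =>
    refine ⟨1, ?_⟩
    cases b <;> simpa [entry, headPath, execP, stepL, herb, iter] using hn
  | 1, hn =>
    refine ⟨0, ?_⟩
    cases b <;> simpa [entry, headPath, execP, stepL, herb, iter] using hn
  | n + 2, hn =>
    refine ⟨n + 2, ?_⟩
    rw [Function.iterate_add_apply] at hn ⊢
    rwa [iter_congr n _ (iter^[2] (entry b))] <;>
      cases b <;> simp [entry, headPath, execP, stepL, herb, iter, eSt]

lemma not_pOmegaCouple (i j : HInterp) : ¬ POmegaCouple witness 0 i j := by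
  rintro ⟨ts, ⟨-, hagree⟩, hx⟩
  have hq : ∀ ss, i 1 ss = j 1 ss := fun ss => hagree 1 ss (by simp)
  rw [terminates_witness_iff, terminates_witness_iff] at hx
  simp only [hq] at hx
  have hiff : ∀ b b' : Bool, (∃ n, j 1 [iter^[n] (entry b) 3] = false) →
      ∃ n, j 1 [iter^[n] (entry b') 3] = false := by
    intro b b' h
    rcases eq_or_ne b' b with rfl | hb
    · exact h
    · obtain rfl : b' = !b := by cases b <;> cases b' <;> simp_all
      exact exists_test_symm (fun t => j 1 [t] = false) b h
  rcases hx with ⟨h, h'⟩ | ⟨h, h'⟩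
  · exact h' (hiff _ _ h)
  · exact h' (hiff _ _ h)

/-! ### The rank of a term: freeness and liberality -/

/-- A rank on terms adapted to the path on which `p` has value `b`. Only the leftmost branch
of a term is inspected: variables have rank 2, `c` has rank 0, the constants assigned to `u` and `v` have
ranks 1 and 2 respectively, and `f`, `h`, `k` add 2, 4, 1. -/
def rk (b : Bool) : Trm → ℕ
  | .var _ => 2
  | .app f [] => if f = 0 then 0 else if f = (if b then 1 else 2) then 1 else 2
  | .app f (t :: _) => rk b t + (if f = 3 then 2 else if f = 4 then 4 else 1)

lemma rk_iter_lt (b : Bool) (d : ℕ → Trm) (hw : rk b (d 3) < rk b (d 2) + 2)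
    (hv : rk b (d 2) < rk b (d 4) + 2) (m n : ℕ) (hmn : m < n) :
    rk b (iter^[m] d 3) < rk b (iter^[n] d 3) := by
  have key : ∀ n, rk b (iter^[n] d 3) < rk b (iter^[n] d 2) + 2 ∧
      rk b (iter^[n] d 2) < rk b (iter^[n] d 4) + 2 := by
    intro n
    induction n with
    | zero => exact ⟨hw, hv⟩
    | succ n ih =>
      rw [Function.iterate_succ_apply']
      simp [iter, Function.update, rk]
      omega
  refine strictMono_nat_of_lt_succ (f := fun n => rk b (iter^[n] d 3)) (fun n => ?_) hmn
  have := key n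
  simp [Function.iterate_succ_apply', iter, Function.update, rk]
  omega

lemma free_witness : Free witness := by
  rintro σ ⟨τ, hσ, hτ⟩
  obtain ⟨b, n, rfl⟩ := (mem_paths_witness τ).1 hτ
  -- `p` is constantly `b`, and `q` holds exactly on the terms other than the last one tested.
  classical
  refine ⟨fun p ts => if p = 0 then b else decide (ts ≠ [iter^[n] (entry b) 3]),
    Agrees.of_prefix ((agrees_witness_path _ b n).2 ⟨by simp, fun m hm => ?_, by simp⟩) hσ⟩
  have hlt := rk_iter_lt b (entry b)
    (by cases b <;> simp [entry, headPath, execP, stepL, herb, rk])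
    (by cases b <;> simp [entry, headPath, execP, stepL, herb, rk, eSt]) m n hm
  have hne : iter^[m] (entry b) 3 ≠ iter^[n] (entry b) 3 := fun h => by simp [h] at hlt
  simpa using hne

/-- The list of terms assigned along a path executed from the Herbrand state `d`. -/
def vals (d : ℕ → Trm) : List Letter → List Trm
  | [] => []
  | .asn y f _ args :: σ =>
      .app f (args.map d) :: vals (Function.update d y (.app f (args.map d))) σ
  | .prd _ _ _ _ :: σ => vals d σ

lemma vals_append (d : ℕ → Trm) (σ τ : List Letter) :
    vals d (σ ++ τ) = vals d σ ++ vals (execP (herb fun _ _ => false) d σ) τ := by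
  induction σ generalizing d with
  | nil => rfl
  | cons c σ ih => cases c <;> simp [vals, ih, execP, stepL, herb]

lemma isChain_vals_loop (b : Bool) (n : ℕ) (d : ℕ → Trm) (t : Trm)
    (ht : rk b t < rk b (d 2) + 2) (hv : rk b (d 2) < rk b (d 4) + 2) :
    List.IsChain (fun s t => rk b s < rk b t) (t :: vals d (loopPath n)) := by
  induction n generalizing d t with
  | zero => simp [loopPath, vals]
  | succ n ih =>
    simp only [loopPath, vals, List.isChain_cons_cons]
    refine ⟨?_, ?_, ?_, ih _ _ ?_ ?_⟩ <;> simp [Function.update, rk] <;> omega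

/-- The first three assigned terms `c, g₁, g₂` have distinct ranks below 3; from `f(u)`, of rank 3, on
the ranks increase. -/
lemma pairwise_vals (b : Bool) (n : ℕ) :
    List.Pairwise (fun s t => rk b s ≠ rk b t) (vals eSt (headPath b ++ loopPath n)) := by
  have aux : ∀ (t₀ t₁ t₂ t₃ : Trm) (L : List Trm), rk b t₀ < 3 → rk b t₁ < 3 → rk b t₂ < 3 →
      rk b t₀ ≠ rk b t₁ → rk b t₀ ≠ rk b t₂ → rk b t₁ ≠ rk b t₂ → rk b t₃ = 3 →
      List.IsChain (fun s t => rk b s < rk b t) (t₃ :: L) →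
      List.Pairwise (fun s t => rk b s ≠ rk b t) (t₀ :: t₁ :: t₂ :: t₃ :: L) := by
    intro t₀ t₁ t₂ t₃ L h₀ h₁ h₂ h₀₁ h₀₂ h₁₂ h₃ hL
    have : IsTrans Trm (fun s t => rk b s < rk b t) := ⟨fun _ _ _ h h' => lt_trans h h'⟩
    rw [List.isChain_iff_pairwise] at hL
    have hge : ∀ t ∈ t₃ :: L, 3 ≤ rk b t := by
      intro t ht
      rcases List.mem_cons.1 ht with rfl | ht
      · exact h₃.ge
      · exact h₃ ▸ ((List.pairwise_cons.1 hL).1 t ht).le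
    have hlow : ∀ s, rk b s < 3 → ∀ t ∈ t₃ :: L, rk b s ≠ rk b t :=
      fun s hs t ht => (hs.trans_le (hge t ht)).ne
    refine .cons ?_ (.cons ?_ (.cons (hlow _ h₂) (hL.imp ne_of_lt)))
    · exact List.forall_mem_cons.2 ⟨h₀₁, List.forall_mem_cons.2 ⟨h₀₂, hlow _ h₀⟩⟩
    · exact List.forall_mem_cons.2 ⟨h₁₂, hlow _ h₁⟩
  cases b <;>
  · simp only [headPath, List.cons_append, List.nil_append, vals]
    refine aux _ _ _ _ _ ?_ ?_ ?_ ?_ ?_ ?_ ?_ (isChain_vals_loop _ n _ _ ?_ ?_) <;>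
      simp [Function.update, rk, eSt]

lemma liberal_witness : Liberal witness := by
  rintro i μ ν y f l args w g m brgs ⟨τ, ⟨ρ, rfl⟩, hτ⟩ - heq
  obtain ⟨b, n, hbn⟩ := (mem_paths_witness _).1 hτ
  have hp := pairwise_vals b n
  rw [← hbn] at hp
  have hne : rk b (hexec (μ ++ [Letter.asn y f l args]) y) ≠
      rk b (hexec (μ ++ Letter.asn y f l args :: (ν ++ [Letter.asn w g m brgs])) w) := by
    simp only [vals_append, vals, List.append_assoc, List.cons_append, List.nil_append] at hp
    have h₁ := (List.pairwise_cons.1 (List.pairwise_append.1 hp).2.1).1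
    have h₂ := h₁ _ (List.mem_append_right _ List.mem_cons_self)
    simpa [hexec, execP, stepL, herb] using h₂
  exact hne (congrArg _ heq)

/-! ### Syntactic conditions and `Need` -/

lemma wellLabelled_witness : WellLabelled witness := by
  rintro (⟨f, l⟩ | ⟨p, l⟩)
  · simp only [witness, branch, loopBody, lsymCount, LSym.fn.injEq]
    split_ifs <;> simp_all
  · simp only [witness, branch, loopBody, lsymCount, LSym.pr.injEq]
    split_ifs <;> simp_all

lemma predLinear_witness : PredLinear witness := by
  intro p
  simp only [witness, branch, loopBody, predCount]
  split_ifs <;> omega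

lemma ifPartsCondition_witness : IfPartsCondition witness := by
  intro p l args t e hocc f v ht he
  have : t = .seq (.assign 1 1 0 []) (.assign 2 2 0 []) ∧
      e = .seq (.assign 2 1 1 []) (.assign 1 2 1 []) := by
    simp only [witness, branch, loopBody] at hocc
    repeat' (first | (exact ⟨rfl, rfl⟩) | (cases ‹Occurs _ _›))
  obtain ⟨rfl, rfl⟩ := this
  simp only [AssignsWith] at ht he
  omega

lemma need_witness : Need witness .omega (.pr 0 0) := by
  have hpath : headPath true ++ loopPath 0 ∈ Paths witness :=
    (mem_paths_witness _).2 ⟨_, _, rfl⟩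
  have hq : Need witness .omega (.pr 1 0) :=
    .ofOmega ⟨[3], loopBody, .seqR (.seqR (.seqR (.refl _)))⟩
  have hf : Need witness .omega (.fn 3 0) := by
    refine .ofDep hq ⟨headPath true, [3], false, ⟨[], [], by simpa [loopPath] using hpath⟩, 3,
      by simp, ?_⟩
    exact .base 3 0 _
  have hg : Need witness .omega (.fn 1 0) := by
    refine .ofDep hf ⟨headPath true, ⟨[], loopPath 0, by simpa using hpath⟩, 3, ?_⟩
    exact .step (F := [(1, 0)]) 3 0 (List.mem_singleton.2 rfl) (.base 1 0 [])
  exact .ofControl hg (.inl ⟨_, _, _, .seqR (.seqL (.refl _)), .inl (by simp [lsymSet])⟩)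

/-- Section 8, Figure 7: there is a special schema S with a
predicate symbol p having a labelled occurrence in `Need_S(ω)` but admitting
no pω-couple for S. -/
theorem need_omega_predicate_without_couple :
    ∃ (S : Schema) (p : ℕ), Special S ∧ (∃ l, Need S Crit.omega (LSym.pr p l)) ∧
      ¬ ∃ i j : HInterp, POmegaCouple S p i j := by
  exact ⟨witness, 0, ⟨wellLabelled_witness, predLinear_witness, free_witness, liberal_witness,
    ifPartsCondition_witness⟩, ⟨0, need_witness⟩, fun ⟨i, j, h⟩ => not_pOmegaCouple i j h⟩

end SchemaSlicing
end

section
/- Let S be a free schema and i a Herbrand interpretation, and suppose μ⟨p^(l),X⟩μ'⟨p^(m),Y⟩ is a finite prefix of π_S(i,e), where p^(l) and p^(m) are labelled occurrences of the same predicate symbol p. Then M[μ]_e(x⃗_l) ≠ M[μ⟨p^(l),X⟩μ']_e(x⃗_m), where x⃗_l and x⃗_m are the argument vectors of p^(l) and p^(m). In other words, a path executed from the natural state e under a Herbrand interpretation in a free schema never defines the same predicate term twice. -/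
namespace SchemaSlicing

theorem paths_nonempty (S : Schema) : (Paths S).Nonempty := by
  induction S with
  | skip => exact ⟨[], rfl⟩
  | assign y f l args => exact ⟨_, rfl⟩
  | seq S₁ S₂ ih₁ ih₂ =>
    obtain ⟨x, hx⟩ := ih₁
    obtain ⟨y, hy⟩ := ih₂
    exact ⟨x ++ y, x, hx, y, hy, rfl⟩
  | ite p l args Tt Tf iht _ =>
    obtain ⟨x, hx⟩ := iht
    exact ⟨_, Or.inl ⟨x, hx, rfl⟩⟩
  | whil p l args body _ => exact ⟨_, 0, rfl⟩

/-- A word with a marked letter, cut into two pieces: the marked letter lies in one of them. -/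
theorem append_cons_eq_append {α : Type*} {σ r x y : List α} {a : α}
    (h : σ ++ a :: r = x ++ y) :
    (∃ s, x = σ ++ a :: s) ∨ (∃ s, σ = x ++ s ∧ y = s ++ a :: r) := by
  rcases List.append_eq_append_iff.1 h with ⟨s, hs, hr⟩ | ⟨s, hs, hr⟩
  · cases s with
    | nil => exact Or.inr ⟨[], by simpa using hs.symm, by simpa using hr.symm⟩
    | cons c s =>
      obtain ⟨rfl, -⟩ := List.cons.inj hr
      exact Or.inl ⟨s, hs⟩
  · exact Or.inr ⟨s, hs, hr⟩

/-- A set of words is flip-closed if any predicate letter of a member can have its truth value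
negated, keeping everything before it and choosing a suitable continuation after it. -/
def FlipClosed (A : Set (List Letter)) : Prop :=
  ∀ σ r p m args b, σ ++ Letter.prd p m args b :: r ∈ A →
    ∃ r', σ ++ Letter.prd p m args (!b) :: r' ∈ A

theorem flipClosed_whileIter {B : Set (List Letter)} (hB : FlipClosed B) (hne : B.Nonempty)
    (q k : ℕ) (brgs : List ℕ) : FlipClosed {σ | ∃ n, σ ∈ whileIter q k brgs B n} := by
  rintro σ r p m args b ⟨n, hn⟩
  induction n generalizing σ with
  | zero =>
    obtain ⟨z, hz⟩ := hne
    cases σ with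
    | nil =>
      obtain ⟨h, -⟩ := List.cons.inj (show _ = [Letter.prd q k brgs false] from hn)
      injection h with h₁ h₂ h₃ h₄
      subst h₁ h₂ h₃ h₄
      -- Instead of leaving the loop at once, traverse the body once and then leave.
      exact ⟨z ++ [Letter.prd p m args false], 1, z, hz, _, rfl, rfl⟩
    | cons c σ =>
      have h := (List.cons.inj (show _ = [Letter.prd q k brgs false] from hn)).2
      simp at h
  | succ n ih =>
    obtain ⟨x, hx, y, hy, h⟩ := hn
    cases σ with
    | nil =>
      obtain ⟨h, -⟩ := List.cons.inj h
      injection h with h₁ h₂ h₃ h₄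
      subst h₁ h₂ h₃ h₄
      exact ⟨[], 0, rfl⟩
    | cons c σ =>
      obtain ⟨rfl, htail⟩ := List.cons.inj h
      rcases append_cons_eq_append htail with ⟨s, rfl⟩ | ⟨s, rfl, rfl⟩
      · obtain ⟨r', hr'⟩ := hB _ _ _ _ _ _ hx
        exact ⟨r' ++ y, n + 1, _, hr', y, hy, by simp⟩
      · obtain ⟨r', n', hr'⟩ := ih _ hy
        exact ⟨r', n' + 1, x, hx, _, hr', by simp⟩

theorem exists_flip_mem_paths (S : Schema) : FlipClosed (Paths S) := by
  induction S with
  | skip =>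
    intro σ r p m args b h
    have h : σ ++ Letter.prd p m args b :: r = [] := h
    simp at h
  | assign y f l brgs =>
    intro σ r p m args b h
    have h : σ ++ Letter.prd p m args b :: r = [Letter.asn y f l brgs] := h
    cases σ <;> simp at h
  | seq S₁ S₂ ih₁ ih₂ =>
    rintro σ r p m args b ⟨x, hx, y, hy, h⟩
    rcases append_cons_eq_append h with ⟨s, rfl⟩ | ⟨s, rfl, rfl⟩
    · obtain ⟨r', hr'⟩ := ih₁ _ _ _ _ _ _ hx
      exact ⟨r' ++ y, _, hr', y, hy, by simp⟩
    · obtain ⟨r', hr'⟩ := ih₂ _ _ _ _ _ _ hy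
      exact ⟨r', x, hx, _, hr', by simp⟩
  | ite q k brgs Tt Tf iht ihf =>
    obtain ⟨zt, hzt⟩ := paths_nonempty Tt
    obtain ⟨zf, hzf⟩ := paths_nonempty Tf
    rintro σ r p m args b (⟨x, hx, h⟩ | ⟨x, hx, h⟩)
    · cases σ with
      | nil =>
        obtain ⟨h, -⟩ := List.cons.inj h
        injection h with h₁ h₂ h₃ h₄
        subst h₁ h₂ h₃ h₄
        exact ⟨zf, Or.inr ⟨zf, hzf, rfl⟩⟩
      | cons c σ =>
        obtain ⟨rfl, rfl⟩ := List.cons.inj h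
        obtain ⟨r', hr'⟩ := iht _ _ _ _ _ _ hx
        exact ⟨r', Or.inl ⟨_, hr', rfl⟩⟩
    · cases σ with
      | nil =>
        obtain ⟨h, -⟩ := List.cons.inj h
        injection h with h₁ h₂ h₃ h₄
        subst h₁ h₂ h₃ h₄
        exact ⟨zt, Or.inl ⟨zt, hzt, rfl⟩⟩
      | cons c σ =>
        obtain ⟨rfl, rfl⟩ := List.cons.inj h
        obtain ⟨r', hr'⟩ := ihf _ _ _ _ _ _ hx
        exact ⟨r', Or.inr ⟨_, hr', rfl⟩⟩
  | whil q k brgs body ih => exact flipClosed_whileIter ih (paths_nonempty body) q k brgs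

theorem execP_herb (i : HInterp) (σ : List Letter) : execP (herb i) eSt σ = hexec σ := by
  have hstep : stepL (herb i) = stepL (herb fun _ _ => false) := by
    funext d a
    cases a <;> rfl
  simp only [hexec, execP, hstep]

/-- An interpretation following a path that meets the same predicate term twice assigns both
occurrences the same truth value. -/
theorem eq_of_hAgrees {i : HInterp} {μ μ' : List Letter} {p l m : ℕ} {al am : List ℕ} {X Y : Bool}
    (ha : hAgrees i (μ ++ Letter.prd p l al X :: (μ' ++ [Letter.prd p m am Y])))
    (h : al.map (hexec μ) = am.map (hexec (μ ++ Letter.prd p l al X :: μ'))) : X = Y := by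
  have h₁ := ha μ p l al X ⟨μ' ++ [Letter.prd p m am Y], by simp⟩
  have h₂ := ha (μ ++ Letter.prd p l al X :: μ') p m am Y ⟨[], by simp⟩
  rw [execP_herb] at h₁ h₂
  rw [← h₁, ← h₂, h]

/-- in a free schema, an executed path (from the natural state,
under a Herbrand interpretation) never defines the same predicate term twice:
if a prefix of the run passes through two occurrences of the same predicate
symbol, the corresponding predicate terms differ. -/
theorem free_no_repeated_predicate_term (S : Schema) (hF : Free S) (i : HInterp)
    (μ μ' : List Letter) (p l m : ℕ) (al am : List ℕ) (X Y : Bool)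
    (hpre : μ ++ Letter.prd p l al X :: (μ' ++ [Letter.prd p m am Y]) ∈ PrePaths S)
    (ha : hAgrees i (μ ++ Letter.prd p l al X :: (μ' ++ [Letter.prd p m am Y]))) :
    al.map (hexec μ) ≠ am.map (hexec (μ ++ Letter.prd p l al X :: μ')) := by
  intro h
  obtain ⟨τ, ⟨r, rfl⟩, hτ⟩ := hpre
  have hτ' : (μ ++ Letter.prd p l al X :: μ') ++ Letter.prd p m am Y :: r ∈ Paths S := by
    simpa using hτ
  obtain ⟨r', hr'⟩ := exists_flip_mem_paths S _ _ _ _ _ _ hτ'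
  obtain ⟨j, hj⟩ := hF (μ ++ Letter.prd p l al X :: (μ' ++ [Letter.prd p m am (!Y)]))
    ⟨_, ⟨r', by simp⟩, hr'⟩
  have hXY := eq_of_hAgrees ha h
  have hXnY := eq_of_hAgrees hj h
  cases Y <;> simp_all

end SchemaSlicing
end
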